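/- Theorem 6.2 (regularization of the elastic hypersingular operator W_s, stated at points off the curve). Let Γ be a simple closed C² curve with L-periodic arclength parametrization z and normal n(s) determined by z'(s) = A n(s). In the setting of the fundamental-type tensor E built from Helmholtz solutions γ_s, γ_p (defined on an open set U ⊆ ℝ²), let u : ℝ → ℂ² be C¹ and L-periodic, let x ∈ ℝ² satisfy x − z(s) ∈ U for all s, and define the elastic double-layer potential D(x) = ∫₀^L (T_yẼ(z(s)))^T u(s) ds, where T_yẼ(z(s)) is the traction with respect to y, with normal n(s), applied columnwise to y ↦ E(x − y) at y = z(s). Then for every unit vector ν ∈ ℝ², with τ = A ν: −T_{ν} D(x) = μ k_s² ∫₀^L [ R(x−z(s)) ν n(s)^T − (ν·n(s)) γ_s(x−z(s)) I − (ν·z'(s)) γ_s(x−z(s)) A ] u(s) ds + 2μ²k_s² ∫₀^L (ν·z'(s)) A E(x−z(s)) u(s) ds − 4μ² ∫₀^L ((τ·∇)E)(x−z(s)) u'(s) ds + (4μ²/(λ+2μ)) ∫₀^L ((τ·∇)γ_p)(x−z(s)) u'(s) ds + 2μ ∫₀^L ((∇R)(x−z(s))·(A u'(s))) ν ds − 2μ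 ∫₀^L (ν·u'(s)) A (∇R)(x−z(s)) ds, where T_ν D = λ(div D)ν + 2μ(ν·∇)D + μ(∂₁D₂ − ∂₂D₁)(ν₂, −ν₁), and all dot products are bilinear (no complex conjugation). -/

import Mathlib

noncomputable section

/-- Points/vectors in the plane. -/
abbrev V2 : Type := Fin 2 → ℝ

/-- Complex 2-vectors. -/
abbrev C2 : Type := Fin 2 → ℂ

/-- The rotation-by-π/2 matrix A = [[0,-1],[1,0]] (real entries). -/
def Arot : Matrix (Fin 2) (Fin 2) ℝ := !![0, -1; 1, 0]

/-- The rotation-by-π/2 matrix A = [[0,-1],[1,0]] (complex entries). -/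
def ArotC : Matrix (Fin 2) (Fin 2) ℂ := !![0, -1; 1, 0]

/-- `pd i f x` is the `i`-th partial derivative of `f : ℝ² → ℂ` at `x`. -/
def pd (i : Fin 2) (f : V2 → ℂ) (x : V2) : ℂ :=
  fderiv ℝ f x (Pi.single i 1)

/-- Directional derivative `(v·∇)f` of a scalar field along the real vector `v`. -/
def dirD (v : V2) (f : V2 → ℂ) (x : V2) : ℂ :=
  (v 0 : ℂ) * pd 0 f x + (v 1 : ℂ) * pd 1 f x


/-- The Hessian matrix of a scalar field. -/
def hess (f : V2 → ℂ) (y : V2) : Matrix (Fin 2) (Fin 2) ℂ :=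
  Matrix.of fun i j => pd i (pd j f) y

/-- The fundamental-type tensor `E = (1/μ)γ_s I + (1/(ρω²)) Hess(γ_s − γ_p)`. -/
def Emat (mu rho om : ℝ) (γs γp : V2 → ℂ) (y : V2) : Matrix (Fin 2) (Fin 2) ℂ :=
  ((mu : ℂ)⁻¹ * γs y) • (1 : Matrix (Fin 2) (Fin 2) ℂ)
    + (((rho * om ^ 2 : ℝ) : ℂ))⁻¹ • hess (fun w => γs w - γp w) y

/-- The traction operator applied columnwise to a matrix field:
`(T_n F)_{·j} = λ(Σ_i ∂_i F_{ij}) n + 2μ (n·∇)F_{·j} + μ(∂₁F_{2j} − ∂₂F_{1j})(n₂, −n₁)`. -/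
def tracM (lam mu : ℝ) (n : V2) (F : V2 → Matrix (Fin 2) (Fin 2) ℂ) (x : V2) :
    Matrix (Fin 2) (Fin 2) ℂ :=
  Matrix.of fun i j =>
    (lam : ℂ) * (∑ l : Fin 2, pd l (fun y => F y l j) x) * (n i : ℂ)
      + 2 * (mu : ℂ) * ((n 0 : ℂ) * pd 0 (fun y => F y i j) x
          + (n 1 : ℂ) * pd 1 (fun y => F y i j) x)
      + (mu : ℂ) * (pd 0 (fun y => F y 1 j) x - pd 1 (fun y => F y 0 j) x)
          * ((![n 1, -n 0] : V2) i : ℂ)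

/-- The traction operator `T_n u = λ(div u)n + 2μ(n·∇)u + μ(∂₁u₂ − ∂₂u₁)(n₂, −n₁)` applied
to a vector field. -/
def tracV (lam mu : ℝ) (n : V2) (u : V2 → C2) (x : V2) : C2 := fun i =>
  (lam : ℂ) * (pd 0 (fun y => u y 0) x + pd 1 (fun y => u y 1) x) * (n i : ℂ)
    + 2 * (mu : ℂ) * ((n 0 : ℂ) * pd 0 (fun y => u y i) x + (n 1 : ℂ) * pd 1 (fun y => u y i) x)
    + (mu : ℂ) * (pd 0 (fun y => u y 1) x - pd 1 (fun y => u y 0) x) * ((![n 1, -n 0] : V2) i : ℂ)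

lemma pd_congr_on {U : Set V2} (hU : IsOpen U) {f g : V2 → ℂ} (h : ∀ y ∈ U, f y = g y)
    {y : V2} (hy : y ∈ U) (i : Fin 2) : pd i f y = pd i g y := by
  unfold pd
  have : f =ᶠ[nhds y] g := Filter.eventually_of_mem (hU.mem_nhds hy) h
  rw [this.fderiv_eq]

lemma pd_contDiffOn {U : Set V2} (hU : IsOpen U) {f : V2 → ℂ} {n m : WithTop ℕ∞}
    (hf : ContDiffOn ℝ n f U) (hmn : m + 1 ≤ n) (i : Fin 2) : ContDiffOn ℝ m (pd i f) U := by
  have h := hf.fderiv_of_isOpen hU hmn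
  exact h.clm_apply contDiffOn_const

lemma diffAt_of_on {U : Set V2} (hU : IsOpen U) {f : V2 → ℂ} {n : WithTop ℕ∞}
    (hf : ContDiffOn ℝ n f U) (hn : n ≠ 0) {y : V2} (hy : y ∈ U) : DifferentiableAt ℝ f y :=
  (hf.contDiffAt (hU.mem_nhds hy)).differentiableAt hn

lemma pd_comm_on {U : Set V2} (hU : IsOpen U) {f : V2 → ℂ}
    (hf : ContDiffOn ℝ 2 f U) {y : V2} (hy : y ∈ U) (i j : Fin 2) :
    pd i (pd j f) y = pd j (pd i f) y := by
  have hsym := (hf.contDiffAt (hU.mem_nhds hy)).isSymmSndFDerivAt (by simp)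
  have hd : DifferentiableAt ℝ (fderiv ℝ f) y :=
    ((hf.fderiv_of_isOpen (m := 1) hU (by norm_num)).contDiffAt (hU.mem_nhds hy)).differentiableAt
      (by norm_num)
  have key : ∀ i j : Fin 2, pd i (pd j f) y
      = fderiv ℝ (fderiv ℝ f) y (Pi.single i 1) (Pi.single j 1) := by
    intro i j
    have h1 := hd.hasFDerivAt.clm_apply (hasFDerivAt_const (Pi.single j (1:ℝ) : V2) y)
    have h2 : HasFDerivAt (pd j f) _ y := h1
    unfold pd at h2 ⊢
    rw [h2.fderiv]
    simp
  rw [key, key]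
  exact hsym _ _

lemma pd_lin {f g : V2 → ℂ} {y : V2} (hf : DifferentiableAt ℝ f y) (hg : DifferentiableAt ℝ g y)
    (c d : ℂ) (i : Fin 2) :
    pd i (fun w => c * f w + d * g w) y = c * pd i f y + d * pd i g y := by
  unfold pd
  have h := (hf.hasFDerivAt.const_mul c).add (hg.hasFDerivAt.const_mul d)
  have h2 : HasFDerivAt (fun w => c * f w + d * g w) _ y := h
  rw [h2.fderiv]
  simp

lemma pd_reflect {f : V2 → ℂ} (w y : V2) (hf : DifferentiableAt ℝ f (w - y)) (i : Fin 2) :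
    pd i (fun y => f (w - y)) y = - pd i f (w - y) := by
  unfold pd
  have h : HasFDerivAt (fun y => f (w - y)) _ y :=
    hf.hasFDerivAt.comp y ((hasFDerivAt_id y).const_sub w)
  rw [h.fderiv]
  simp

lemma fderiv_eq_pd (f : V2 → ℂ) (y v : V2) :
    fderiv ℝ f y v = (v 0 : ℂ) * pd 0 f y + (v 1 : ℂ) * pd 1 f y := by
  have hv : v = v 0 • (Pi.single 0 1 : V2) + v 1 • (Pi.single 1 1 : V2) := by
    ext k; fin_cases k <;> simp
  unfold pd
  conv_lhs => rw [hv]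
  rw [map_add, map_smul, map_smul]
  simp

lemma hasDerivAt_curve {g : V2 → ℂ} {z : ℝ → V2} {x : V2} {s : ℝ}
    (hz : DifferentiableAt ℝ z s) (hg : DifferentiableAt ℝ g (x - z s)) :
    HasDerivAt (fun s => g (x - z s))
      (-((deriv z s 0 : ℂ) * pd 0 g (x - z s) + (deriv z s 1 : ℂ) * pd 1 g (x - z s))) s := by
  have h := hg.hasFDerivAt.comp_hasDerivAt s (hz.hasDerivAt.const_sub x)
  rw [map_neg, fderiv_eq_pd] at h
  exact h

lemma near_curve {U : Set V2} (hU : IsOpen U) {L : ℝ} {z : ℝ → V2} (hz : Continuous z) {x : V2}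
    (hx : ∀ s : ℝ, x - z s ∈ U) :
    ∃ δ > 0, ∃ K : Set V2, IsCompact K ∧ K ⊆ U ∧
      ∀ w ∈ Metric.ball x δ, ∀ s ∈ Set.uIcc 0 L, w - z s ∈ K := by
  have hK : IsCompact ((fun s => x - z s) '' Set.uIcc 0 L) :=
    isCompact_uIcc.image (by fun_prop)
  obtain ⟨δ, hδ, hsub⟩ := hK.exists_cthickening_subset_open hU (by
    rintro _ ⟨s, _, rfl⟩; exact hx s)
  refine ⟨δ, hδ, _, hK.cthickening, hsub, ?_⟩
  intro w hw s hs
  refine Metric.mem_cthickening_of_dist_le _ (x - z s) _ _ ⟨s, hs, rfl⟩ ?_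
  rw [dist_sub_right]
  exact (Metric.mem_ball.1 hw).le

lemma pd_param {ι : Type} [Fintype ι] {U : Set V2} (hU : IsOpen U) {L : ℝ} {z : ℝ → V2}
    (hz : Continuous z) {x : V2} (hx : ∀ s : ℝ, x - z s ∈ U) (g : ι → V2 → ℂ)
    (hg : ∀ k, ContDiffOn ℝ 1 (g k) U) (c : ι → ℝ → ℂ) (hc : ∀ k, Continuous (c k)) (m : Fin 2) :
    pd m (fun w => ∫ s in (0:ℝ)..L, ∑ k, c k s * g k (w - z s)) x
      = ∫ s in (0:ℝ)..L, ∑ k, c k s * pd m (g k) (x - z s) := by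
  obtain ⟨δ, hδ, K, hK, hKU, hnear⟩ := near_curve (L := L) hU hz hx
  have hfd : ∀ k, ContinuousOn (fderiv ℝ (g k)) U := fun k =>
    (hg k).continuousOn_fderiv_of_isOpen hU le_rfl
  have hb : ∀ k, ∃ C, ∀ y ∈ K, ‖fderiv ℝ (g k) y‖ ≤ C := fun k =>
    hK.exists_bound_of_continuousOn ((hfd k).mono hKU)
  choose C hC using hb
  have hcontF : ∀ w ∈ Metric.ball x δ,
      ContinuousOn (fun s => ∑ k, c k s * g k (w - z s)) (Set.uIcc 0 L) := by
    intro w hw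
    refine continuousOn_finsetSum _ fun k _ => (hc k).continuousOn.mul ?_
    exact (hg k).continuousOn.comp (by fun_prop) fun s hs => hKU (hnear w hw s hs)
  have hcontF' : Continuous (fun s => ∑ k, c k s • fderiv ℝ (g k) (x - z s)) := by
    refine continuous_finsetSum _ fun k _ => (hc k).smul ?_
    exact (hfd k).comp_continuous (by fun_prop) hx
  have main := intervalIntegral.hasFDerivAt_integral_of_dominated_of_fderiv_le
    (μ := MeasureTheory.volume) (a := 0) (b := L) (x₀ := x) (s := Metric.ball x δ)
    (F := fun w s => ∑ k, c k s * g k (w - z s))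
    (F' := fun w s => ∑ k, c k s • fderiv ℝ (g k) (w - z s))
    (bound := fun s => ∑ k, ‖c k s‖ * C k)
    (Metric.ball_mem_nhds x hδ)
    (by
      filter_upwards [Metric.ball_mem_nhds x hδ] with w hw
      exact ((hcontF w hw).mono Set.uIoc_subset_uIcc).aestronglyMeasurable measurableSet_uIoc)
    ((hcontF x (Metric.mem_ball_self hδ)).intervalIntegrable)
    (hcontF'.aestronglyMeasurable)
    (by
      refine Filter.Eventually.of_forall fun s hs w hw => ?_
      refine (norm_sum_le _ _).trans (Finset.sum_le_sum fun k _ => ?_)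
      rw [norm_smul]
      exact mul_le_mul_of_nonneg_left (hC k _ (hnear w hw s (Set.uIoc_subset_uIcc hs)))
        (norm_nonneg _))
    (by
      refine Continuous.intervalIntegrable ?_ _ _
      refine continuous_finsetSum _ fun k _ => ?_
      exact (hc k).norm.mul continuous_const)
    (by
      refine Filter.Eventually.of_forall fun s hs w hw => ?_
      refine HasFDerivAt.fun_sum fun k _ => ?_
      have hd : DifferentiableAt ℝ (g k) (w - z s) :=
        diffAt_of_on hU (hg k) one_ne_zero (hKU (hnear w hw s (Set.uIoc_subset_uIcc hs)))
      have h1 := hd.hasFDerivAt.comp w ((hasFDerivAt_id w).sub_const (z s))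
      have h2 := h1.const_mul (c k s)
      exact h2)
  unfold pd
  rw [main.fderiv, ContinuousLinearMap.intervalIntegral_apply (hcontF'.intervalIntegrable _ _)]
  simp

lemma Emat_apply' (mu rho om : ℝ) (γs γp : V2 → ℂ) (y : V2) (a b : Fin 2) :
    Emat mu rho om γs γp y a b = ((mu : ℂ)⁻¹ * (if a = b then 1 else 0)) * γs y
      + (((rho * om ^ 2 : ℝ) : ℂ))⁻¹ * pd a (pd b (fun w => γs w - γp w)) y := by
  simp only [Emat, hess, Matrix.add_apply, Matrix.smul_apply, Matrix.one_apply, Matrix.of_apply,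
    smul_eq_mul]
  ring

/-- `HI L f I`: `f` is integrable on `[0,L]` with integral `I`. -/
def HI (L : ℝ) (f : ℝ → ℂ) (I : ℂ) : Prop :=
  IntervalIntegrable f MeasureTheory.volume 0 L ∧ ∫ s in (0 : ℝ)..L, f s = I

lemma HI.of_cont {L : ℝ} {f : ℝ → ℂ} (hf : Continuous f) : HI L f (∫ s in (0 : ℝ)..L, f s) :=
  ⟨hf.intervalIntegrable _ _, rfl⟩

lemma HI.add {L : ℝ} {f g : ℝ → ℂ} {I J : ℂ} (hf : HI L f I) (hg : HI L g J) :
    HI L (fun s => f s + g s) (I + J) :=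
  ⟨hf.1.add hg.1, by rw [intervalIntegral.integral_add hf.1 hg.1, hf.2, hg.2]⟩

lemma HI.sub {L : ℝ} {f g : ℝ → ℂ} {I J : ℂ} (hf : HI L f I) (hg : HI L g J) :
    HI L (fun s => f s - g s) (I - J) :=
  ⟨hf.1.sub hg.1, by rw [intervalIntegral.integral_sub hf.1 hg.1, hf.2, hg.2]⟩

lemma HI.cmul {L : ℝ} {f : ℝ → ℂ} {I : ℂ} (c : ℂ) (hf : HI L f I) :
    HI L (fun s => c * f s) (c * I) :=
  ⟨hf.1.const_mul c, by rw [intervalIntegral.integral_const_mul, hf.2]⟩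

lemma HI.eq_of {L : ℝ} {f g h : ℝ → ℂ} {I J : ℂ} (hf : HI L f I) (hg : HI L g J) (hh : HI L h 0)
    (e : ∀ s, f s = g s - h s) : I = J := by
  have h1 := (hg.sub hh).2
  rw [← hf.2, intervalIntegral.integral_congr (g := fun s => g s - h s) (fun s _ => e s), h1,
    sub_zero]

/-- Coefficients of the double-layer kernel. -/
def cco (lam mu : ℝ) (n : V2) (u : C2) (k : Fin 2 × Fin 2) : ℂ :=
  -((lam : ℂ) * (if k.1 = k.2 then ((n 0 : ℂ) * u 0 + (n 1 : ℂ) * u 1) else 0)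
    + 2 * (mu : ℂ) * (n k.1 : ℂ) * u k.2
    + (mu : ℂ) * ((n 1 : ℂ) * u 0 - (n 0 : ℂ) * u 1) *
        (if k.1 = k.2 then 0 else if k.1 = 0 then 1 else -1))

lemma kernel_eq (lam mu : ℝ) (n : V2) (u : C2) (E : V2 → Matrix (Fin 2) (Fin 2) ℂ) (w y : V2)
    (hE : ∀ a b, DifferentiableAt ℝ (fun v => E v a b) (w - y)) (b : Fin 2) :
    ∑ j : Fin 2, tracM lam mu n (fun y => E (w - y)) y j b * u j
      = ∑ k : Fin 2 × Fin 2, cco lam mu n u k * pd k.1 (fun v => E v k.2 b) (w - y) := by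
  have h : ∀ l a, pd l (fun y => E (w - y) a b) y = - pd l (fun v => E v a b) (w - y) :=
    fun l a => pd_reflect (f := fun v => E v a b) w y (hE a b) l
  simp only [tracM, Matrix.of_apply, h, Fin.sum_univ_two, Fintype.sum_prod_type, cco]
  simp
  ring

lemma alg_identity (lam mu rho om ks kp : ℝ)
    (hmu : 0 < mu) (hlm : 0 < lam + mu) (hrho : 0 < rho) (hom : 0 < om)
    (hks : ks = om * Real.sqrt (rho / mu)) (hkp : kp = om * Real.sqrt (rho / (lam + 2 * mu)))
    (U : Set V2) (hU : IsOpen U) (γs γp R : V2 → ℂ) (hR : R = fun w => γs w - γp w)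
    (E : Fin 2 → Fin 2 → V2 → ℂ) (hE : E = fun a b w => Emat mu rho om γs γp w a b)
    (hγs : ContDiffOn ℝ 4 γs U) (hγp : ContDiffOn ℝ 4 γp U)
    (hHs : ∀ y ∈ U, pd 0 (pd 0 γs) y + pd 1 (pd 1 γs) y + (ks : ℂ) ^ 2 * γs y = 0)
    (hHp : ∀ y ∈ U, pd 0 (pd 0 γp) y + pd 1 (pd 1 γp) y + (kp : ℂ) ^ 2 * γp y = 0)
    (p : V2) (hp : p ∈ U) (n ν t : V2) (ht : t = Arot.mulVec n) (u : C2) (i : Fin 2) :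
    -((lam : ℂ) * ((∑ k : Fin 2 × Fin 2, cco lam mu n u k * pd 0 (pd k.1 (E k.2 0)) p)
          + (∑ k : Fin 2 × Fin 2, cco lam mu n u k * pd 1 (pd k.1 (E k.2 1)) p)) * (ν i : ℂ)
        + 2 * (mu : ℂ) *
          ((ν 0 : ℂ) * (∑ k : Fin 2 × Fin 2, cco lam mu n u k * pd 0 (pd k.1 (E k.2 i)) p)
          + (ν 1 : ℂ) * (∑ k : Fin 2 × Fin 2, cco lam mu n u k * pd 1 (pd k.1 (E k.2 i)) p))
        + (mu : ℂ) *
          ((∑ k : Fin 2 × Fin 2, cco lam mu n u k * pd 0 (pd k.1 (E k.2 1)) p)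
          - (∑ k : Fin 2 × Fin 2, cco lam mu n u k * pd 1 (pd k.1 (E k.2 0)) p))
            * ((![ν 1, -ν 0] : V2) i : ℂ))
      = ((mu * ks ^ 2 : ℝ) : ℂ) * (∑ j : Fin 2,
              ((γs p - γp p) * (ν i : ℂ) * (n j : ℂ)
                - (if i = j then ((ν 0 * n 0 + ν 1 * n 1 : ℝ) : ℂ) * γs p else 0)
                - ((ν 0 * t 0 + ν 1 * t 1 : ℝ) : ℂ) * γs p * ArotC i j)
                * u j)
          + ((2 * mu ^ 2 * ks ^ 2 : ℝ) : ℂ) * (((ν 0 * t 0 + ν 1 * t 1 : ℝ) : ℂ)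
                * ∑ j : Fin 2, (ArotC * Emat mu rho om γs γp p) i j * u j)
          - ((4 * mu ^ 2 : ℝ) : ℂ) * (∑ j : Fin 2,
              (-(ν 1 : ℂ) * ((t 0 : ℂ) * pd 0 (pd 0 (E i j)) p + (t 1 : ℂ) * pd 1 (pd 0 (E i j)) p)
               + (ν 0 : ℂ) * ((t 0 : ℂ) * pd 0 (pd 1 (E i j)) p + (t 1 : ℂ) * pd 1 (pd 1 (E i j)) p))
                * u j)
          + ((4 * mu ^ 2 / (lam + 2 * mu) : ℝ) : ℂ) *
              ((-(ν 1 : ℂ) * ((t 0 : ℂ) * pd 0 (pd 0 γp) p + (t 1 : ℂ) * pd 1 (pd 0 γp) p)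
               + (ν 0 : ℂ) * ((t 0 : ℂ) * pd 0 (pd 1 γp) p + (t 1 : ℂ) * pd 1 (pd 1 γp) p))
                * u i)
          + ((2 * mu : ℝ) : ℂ) * ((
              -(((t 0 : ℂ) * pd 0 (pd 0 R) p + (t 1 : ℂ) * pd 1 (pd 0 R) p) * u 1)
              + ((t 0 : ℂ) * pd 0 (pd 1 R) p + (t 1 : ℂ) * pd 1 (pd 1 R) p) * u 0) * (ν i : ℂ))
          - ((2 * mu : ℝ) : ℂ) * (((ν 0 : ℂ) * u 0 + (ν 1 : ℂ) * u 1) *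
              (ArotC i 0 * ((t 0 : ℂ) * pd 0 (pd 0 R) p + (t 1 : ℂ) * pd 1 (pd 0 R) p)
              + ArotC i 1 * ((t 0 : ℂ) * pd 0 (pd 1 R) p + (t 1 : ℂ) * pd 1 (pd 1 R) p))) := by
  have hRc : ContDiffOn ℝ 4 R U := by rw [hR]; exact hγs.sub hγp
  have hR1 : ∀ a, ContDiffOn ℝ 3 (pd a R) U := fun a => pd_contDiffOn hU hRc (by norm_num) a
  have hR2 : ∀ a b, ContDiffOn ℝ 2 (pd a (pd b R)) U :=
    fun a b => pd_contDiffOn hU (hR1 b) (by norm_num) a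
  have hR3 : ∀ a b c, ContDiffOn ℝ 1 (pd a (pd b (pd c R))) U :=
    fun a b c => pd_contDiffOn hU (hR2 b c) (by norm_num) a
  have hs1 : ∀ a, ContDiffOn ℝ 3 (pd a γs) U := fun a => pd_contDiffOn hU hγs (by norm_num) a
  have hs2 : ∀ a b, ContDiffOn ℝ 2 (pd a (pd b γs)) U :=
    fun a b => pd_contDiffOn hU (hs1 b) (by norm_num) a
  -- linear combinations
  have lin : ∀ (c d : ℂ) (f g : V2 → ℂ), ContDiffOn ℝ 1 f U → ContDiffOn ℝ 1 g U →
      ∀ (h : V2 → ℂ), (∀ y ∈ U, h y = c * f y + d * g y) →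
      ∀ l, ∀ y ∈ U, pd l h y = c * pd l f y + d * pd l g y := by
    intro c d f g hf hg h hh l y hy
    rw [pd_congr_on hU hh hy]
    exact pd_lin (diffAt_of_on hU hf one_ne_zero hy) (diffAt_of_on hU hg one_ne_zero hy) c d l
  -- E derivatives
  have hE0 : ∀ a b, ∀ y ∈ U, E a b y = ((mu : ℂ)⁻¹ * (if a = b then 1 else 0)) * γs y
      + (((rho * om ^ 2 : ℝ) : ℂ))⁻¹ * pd a (pd b R) y := by
    intro a b y _
    rw [hE, hR]; exact Emat_apply' _ _ _ _ _ _ _ _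
  have hE1 : ∀ a b l, ∀ y ∈ U, pd l (E a b) y = ((mu : ℂ)⁻¹ * (if a = b then 1 else 0)) * pd l γs y
      + (((rho * om ^ 2 : ℝ) : ℂ))⁻¹ * pd l (pd a (pd b R)) y := fun a b l =>
    lin _ _ _ _ (hγs.of_le (by norm_num)) ((hR2 a b).of_le (by norm_num)) _ (hE0 a b) l
  have hE2 : ∀ a b l m, pd m (pd l (E a b)) p
      = ((mu : ℂ)⁻¹ * (if a = b then 1 else 0)) * pd m (pd l γs) p
      + (((rho * om ^ 2 : ℝ) : ℂ))⁻¹ * pd m (pd l (pd a (pd b R))) p := fun a b l m =>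
    lin _ _ _ _ ((hs1 l).of_le (by norm_num)) (hR3 l a b) _ (hE1 a b l) m p hp
  -- γp
  have hp0 : ∀ y ∈ U, γp y = 1 * γs y + (-1) * R y := by
    intro y _; rw [hR]; ring
  have hp1 : ∀ l, ∀ y ∈ U, pd l γp y = 1 * pd l γs y + (-1) * pd l R y := fun l =>
    lin _ _ _ _ (hγs.of_le (by norm_num)) (hRc.of_le (by norm_num)) _ hp0 l
  have hp2 : ∀ l m, ∀ y ∈ U, pd m (pd l γp) y = 1 * pd m (pd l γs) y + (-1) * pd m (pd l R) y :=
    fun l m =>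
    lin _ _ _ _ ((hs1 l).of_le (by norm_num)) ((hR1 l).of_le (by norm_num)) _ (hp1 l) m
  -- Laplacians
  have hks2 : (ks : ℂ) ^ 2 = ((rho * om ^ 2 : ℝ) : ℂ) / mu := by
    rw [hks, ← Complex.ofReal_pow, mul_pow, Real.sq_sqrt (by positivity)]
    push_cast; ring
  have hkp2 : (kp : ℂ) ^ 2 = ((rho * om ^ 2 : ℝ) : ℂ) / (lam + 2 * mu) := by
    rw [hkp, ← Complex.ofReal_pow, mul_pow,
      Real.sq_sqrt (div_nonneg hrho.le (by linarith))]
    push_cast; ring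
  have hls : ∀ y ∈ U, pd 1 (pd 1 γs) y = -(ks : ℂ) ^ 2 * γs y + (-1) * pd 0 (pd 0 γs) y := by
    intro y hy; linear_combination hHs y hy
  obtain ⟨α, hα⟩ : ∃ α : ℂ, α = (kp : ℂ) ^ 2 - (ks : ℂ) ^ 2 := ⟨_, rfl⟩
  obtain ⟨β, hβ⟩ : ∃ β : ℂ, β = -(kp : ℂ) ^ 2 := ⟨_, rfl⟩
  have hlR : ∀ y ∈ U, pd 1 (pd 1 R) y
      = 1 * (α * γs y + β * R y) + (-1) * pd 0 (pd 0 R) y := by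
    intro y hy
    have h1 := hHs y hy
    have h2 := hHp y hy
    rw [hp2 _ _ y hy, hp2 _ _ y hy, hp0 y hy] at h2
    rw [hα, hβ]
    linear_combination h1 - h2
  have hlR3 : ∀ l, ∀ y ∈ U, pd l (pd 1 (pd 1 R)) y
      = 1 * (α * pd l γs y + β * pd l R y) + (-1) * pd l (pd 0 (pd 0 R)) y := by
    intro l y hy
    rw [lin 1 (-1) (fun y => α * γs y + β * R y) _ (by
      exact (contDiffOn_const.mul (hγs.of_le (by norm_num))).add
        (contDiffOn_const.mul (hRc.of_le (by norm_num)))) ((hR2 0 0).of_le (by norm_num)) _ hlR l y hy,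
      lin α β γs R (hγs.of_le (by norm_num)) (hRc.of_le (by norm_num)) (fun y => α * γs y + β * R y)
        (fun _ _ => rfl) l y hy]
  have hlR4 : ∀ l m, pd m (pd l (pd 1 (pd 1 R))) p
      = 1 * (α * pd m (pd l γs) p + β * pd m (pd l R) p) + (-1) * pd m (pd l (pd 0 (pd 0 R))) p := by
    intro l m
    rw [lin 1 (-1) (fun y => α * pd l γs y + β * pd l R y) _ (by
      exact (contDiffOn_const.mul ((hs1 l).of_le (by norm_num))).add
        (contDiffOn_const.mul ((hR1 l).of_le (by norm_num)))) (hR3 l 0 0) _ (hlR3 l) m p hp,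
      lin α β (pd l γs) (pd l R) ((hs1 l).of_le (by norm_num)) ((hR1 l).of_le (by norm_num))
        (fun y => α * pd l γs y + β * pd l R y) (fun _ _ => rfl) m p hp]
  -- commutations
  have cs : pd 1 (pd 0 γs) p = pd 0 (pd 1 γs) p := pd_comm_on hU (hγs.of_le (by norm_num)) hp 1 0
  have c0 : ∀ y ∈ U, pd 1 (pd 0 R) y = pd 0 (pd 1 R) y :=
    fun y hy => pd_comm_on hU (hRc.of_le (by norm_num)) hy 1 0
  have c1 : ∀ m l, pd m (pd l (pd 1 (pd 0 R))) p = pd m (pd l (pd 0 (pd 1 R))) p := by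
    intro m l
    exact pd_congr_on hU (fun y hy => pd_congr_on hU c0 hy l) hp m
  have c2 : ∀ m b, pd m (pd 1 (pd 0 (pd b R))) p = pd m (pd 0 (pd 1 (pd b R))) p := by
    intro m b
    exact pd_congr_on hU (fun y hy => pd_comm_on hU ((hR1 b).of_le (by norm_num)) hy 1 0) hp m
  have c3 : ∀ a b, pd 1 (pd 0 (pd a (pd b R))) p = pd 0 (pd 1 (pd a (pd b R))) p := by
    intro a b
    exact pd_comm_on hU (hR2 a b) hp 1 0
  have c0' := c0 p hp
  have d1111 := hlR4 1 1
  have d0111 := hlR4 1 0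
  have d0011 := hlR4 0 0
  rw [c2, c3, c1, c2] at d1111
  rw [c2, c1] at d0111
  have dR := hlR p hp
  have ds := hls p hp
  have hP := hp0 p hp
  have hEm : ∀ a b, Emat mu rho om γs γp p a b = ((mu : ℂ)⁻¹ * (if a = b then 1 else 0)) * γs p
      + (((rho * om ^ 2 : ℝ) : ℂ))⁻¹ * pd a (pd b R) p := by
    intro a b
    rw [← hE0 a b p hp, hE]
  have ht0 : t 0 = - n 1 := by rw [ht]; simp [Arot, Matrix.mulVec, dotProduct]
  have ht1 : t 1 = n 0 := by rw [ht]; simp [Arot, Matrix.mulVec, dotProduct]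
  have hW : ((rho * om ^ 2 : ℝ) : ℂ) ≠ 0 := by
    exact_mod_cast (by positivity : rho * om ^ 2 ≠ 0)
  have hmuC : (mu : ℂ) ≠ 0 := by exact_mod_cast hmu.ne'
  have hlC : (lam : ℂ) + 2 * mu ≠ 0 := by
    exact_mod_cast (by linarith : (0:ℝ) < lam + 2 * mu).ne'
  have hrC : (rho : ℂ) ≠ 0 := by exact_mod_cast hrho.ne'
  have hoC : (om : ℂ) ≠ 0 := by exact_mod_cast hom.ne'
  obtain ⟨q, hq⟩ : ∃ q : ℂ, q = (lam : ℂ) + 2 * mu := ⟨_, rfl⟩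
  have hlam : (lam : ℂ) = q - 2 * mu := by rw [hq]; ring
  have hi : i = 0 ∨ i = 1 := by fin_cases i <;> simp
  rw [← hq] at hlC hkp2
  rcases hi with rfl | rfl
  all_goals
    simp only [hE2, hp2 _ _ p hp, Matrix.mul_apply, hEm, hP, ht0, ht1, Fin.sum_univ_two,
      Fintype.sum_prod_type, cco, c1, c2, c3, c0', cs]
    rw [d1111, d0111, d0011, dR, ds]
    generalize pd 0 (pd 0 (pd 0 (pd 0 R))) p = r0000
    generalize pd 0 (pd 0 (pd 0 (pd 1 R))) p = r0001
    generalize pd 0 (pd 0 R) p = r00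
    generalize pd 0 (pd 1 R) p = r01
    generalize pd 0 (pd 0 γs) p = s00
    generalize pd 0 (pd 1 γs) p = s01
    generalize R p = r
    generalize γs p = s
    rw [hα, hβ, hkp2]
    push_cast
    rw [hks2, ← hq, hlam]
    push_cast
    simp [ArotC]
    field_simp
    ring

/-- Theorem 6.2: regularization of the elastic hypersingular operator `W_s`, stated at
points off the curve: with `D(x) = ∫₀^L (T_yẼ(z(s)))^T u(s) ds`, for every unit vector `ν`
(with tangent `τ = A ν`),
`−T_ν D(x) = μk_s² ∫ [R ν n^T − (ν·n)γ_s I − (ν·z')γ_s A] u ds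
  + 2μ²k_s² ∫ (ν·z') A E u ds − 4μ² ∫ ((τ·∇)E) u' ds + (4μ²/(λ+2μ)) ∫ ((τ·∇)γ_p) u' ds
  + 2μ ∫ (∇R·(A u')) ν ds − 2μ ∫ (ν·u') A ∇R ds`, componentwise. -/
theorem elastic_hypersingular_regularization (lam mu rho om ks kp : ℝ)
    (hmu : 0 < mu) (hlm : 0 < lam + mu) (hrho : 0 < rho) (hom : 0 < om)
    (hks : ks = om * Real.sqrt (rho / mu)) (hkp : kp = om * Real.sqrt (rho / (lam + 2 * mu)))
    (L : ℝ) (hL : 0 < L) (z : ℝ → V2) (hz : ContDiff ℝ 2 z)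
    (hzper : Function.Periodic z L) (hzinj : Set.InjOn z (Set.Ico 0 L))
    (harc : ∀ s : ℝ, (deriv z s 0) ^ 2 + (deriv z s 1) ^ 2 = 1)
    (nn : ℝ → V2) (hnn : ∀ s : ℝ, deriv z s = Arot.mulVec (nn s))
    (U : Set V2) (hU : IsOpen U) (γs γp : V2 → ℂ)
    (hγs : ContDiffOn ℝ 4 γs U) (hγp : ContDiffOn ℝ 4 γp U)
    (hHs : ∀ y ∈ U, pd 0 (pd 0 γs) y + pd 1 (pd 1 γs) y + (ks : ℂ) ^ 2 * γs y = 0)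
    (hHp : ∀ y ∈ U, pd 0 (pd 0 γp) y + pd 1 (pd 1 γp) y + (kp : ℂ) ^ 2 * γp y = 0)
    (u : ℝ → C2) (hu : ContDiff ℝ 1 u) (huper : Function.Periodic u L)
    (x : V2) (hx : ∀ s : ℝ, x - z s ∈ U)
    (ν : V2) (hν : (ν 0) ^ 2 + (ν 1) ^ 2 = 1) :
    ∀ i : Fin 2,
      -(tracV lam mu ν (fun w => fun i' => ∫ s in (0 : ℝ)..L, ∑ j : Fin 2,
          tracM lam mu (nn s) (fun y => Emat mu rho om γs γp (w - y)) (z s) j i' * u s j) x i)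
        = ((mu * ks ^ 2 : ℝ) : ℂ) * (∫ s in (0 : ℝ)..L, ∑ j : Fin 2,
              ((γs (x - z s) - γp (x - z s)) * (ν i : ℂ) * (nn s j : ℂ)
                - (if i = j then ((ν 0 * nn s 0 + ν 1 * nn s 1 : ℝ) : ℂ) * γs (x - z s) else 0)
                - ((ν 0 * deriv z s 0 + ν 1 * deriv z s 1 : ℝ) : ℂ) * γs (x - z s) * ArotC i j)
                * u s j)
          + ((2 * mu ^ 2 * ks ^ 2 : ℝ) : ℂ) * (∫ s in (0 : ℝ)..L,
              ((ν 0 * deriv z s 0 + ν 1 * deriv z s 1 : ℝ) : ℂ)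
                * ∑ j : Fin 2, (ArotC * Emat mu rho om γs γp (x - z s)) i j * u s j)
          - ((4 * mu ^ 2 : ℝ) : ℂ) * (∫ s in (0 : ℝ)..L, ∑ j : Fin 2,
              dirD (Arot.mulVec ν) (fun w => Emat mu rho om γs γp w i j) (x - z s)
                * deriv u s j)
          + ((4 * mu ^ 2 / (lam + 2 * mu) : ℝ) : ℂ) * (∫ s in (0 : ℝ)..L,
              dirD (Arot.mulVec ν) γp (x - z s) * deriv u s i)
          + ((2 * mu : ℝ) : ℂ) * (∫ s in (0 : ℝ)..L,
              (∑ j : Fin 2, pd j (fun w => γs w - γp w) (x - z s)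
                  * ArotC.mulVec (deriv u s) j) * (ν i : ℂ))
          - ((2 * mu : ℝ) : ℂ) * (∫ s in (0 : ℝ)..L,
              ((ν 0 : ℂ) * deriv u s 0 + (ν 1 : ℂ) * deriv u s 1)
                * ArotC.mulVec (fun j => pd j (fun w => γs w - γp w) (x - z s)) i) := by
  intro i
  set R : V2 → ℂ := fun w => γs w - γp w with hR
  obtain ⟨E, hE⟩ : ∃ E : Fin 2 → Fin 2 → V2 → ℂ,
    E = fun a b w => Emat mu rho om γs γp w a b := ⟨_, rfl⟩
  -- regularity
  have hRc : ContDiffOn ℝ 4 R U := hγs.sub hγp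
  have hR1 : ∀ a, ContDiffOn ℝ 3 (pd a R) U := fun a => pd_contDiffOn hU hRc (by norm_num) a
  have hR2 : ∀ a b, ContDiffOn ℝ 2 (pd a (pd b R)) U :=
    fun a b => pd_contDiffOn hU (hR1 b) (by norm_num) a
  have hp1 : ∀ a, ContDiffOn ℝ 3 (pd a γp) U := fun a => pd_contDiffOn hU hγp (by norm_num) a
  have hEc : ∀ a b, ContDiffOn ℝ 2 (E a b) U := by
    intro a b
    have : E a b = fun y => ((mu : ℂ)⁻¹ * (if a = b then 1 else 0)) * γs y
      + (((rho * om ^ 2 : ℝ) : ℂ))⁻¹ * pd a (pd b R) y := by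
      funext y; rw [hE]; exact Emat_apply' _ _ _ _ _ _ _ _
    rw [this]
    exact (contDiffOn_const.mul (hγs.of_le (by norm_num))).add (contDiffOn_const.mul (hR2 a b))
  have hE1 : ∀ a b l, ContDiffOn ℝ 1 (pd l (E a b)) U :=
    fun a b l => pd_contDiffOn hU (hEc a b) (by norm_num) l
  have hE2 : ∀ a b l m, ContDiffOn ℝ 0 (pd m (pd l (E a b))) U :=
    fun a b l m => pd_contDiffOn hU (hE1 a b l) (by norm_num) m
  have hzc : Continuous z := hz.continuous
  have hz' : Continuous (deriv z) := hz.continuous_deriv (by norm_num)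
  have hu' : Continuous (deriv u) := hu.continuous_deriv (by norm_num)
  have huc : Continuous u := hu.continuous
  have hzd : ∀ s, DifferentiableAt ℝ z s := fun s => hz.differentiable (by norm_num) s
  have hud : ∀ s j, HasDerivAt (fun s => u s j) (deriv u s j) s := fun s =>
    hasDerivAt_pi.1 (hu.differentiable (by norm_num) s).hasDerivAt
  have cc : ∀ {g : V2 → ℂ} {n : WithTop ℕ∞}, ContDiffOn ℝ n g U →
      Continuous (fun s => g (x - z s)) := by
    intro g n hg
    exact hg.continuousOn.comp_continuous (by fun_prop) hx
  have hz0 : Continuous (fun s => deriv z s 0) := (continuous_apply 0).comp hz'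
  have hz1 : Continuous (fun s => deriv z s 1) := (continuous_apply 1).comp hz'
  have hn0 : ∀ s, nn s 0 = deriv z s 1 := by
    intro s; rw [hnn s]; simp [Arot, Matrix.mulVec, dotProduct]
  have hn1 : ∀ s, nn s 1 = - deriv z s 0 := by
    intro s; rw [hnn s]; simp [Arot, Matrix.mulVec, dotProduct]
  have hnc : ∀ k, Continuous (fun s => nn s k) := by
    intro k
    have hk : k = 0 ∨ k = 1 := by fin_cases k <;> simp
    rcases hk with rfl | rfl
    · simp only [hn0]; exact hz1
    · simp only [hn1]; exact hz0.neg
  have hnC : ∀ k, Continuous (fun s => (nn s k : ℂ)) :=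
    fun k => Complex.continuous_ofReal.comp (hnc k)
  have huj : ∀ j, Continuous (fun s => u s j) := fun j => (continuous_apply j).comp huc
  have huj' : ∀ j, Continuous (fun s => deriv u s j) := fun j => (continuous_apply j).comp hu'
  have hcco : ∀ k, Continuous (fun s => cco lam mu (nn s) (u s) k) := by
    intro k
    have := hnC 0
    have := hnC 1
    have := hnC k.1
    have := huj 0
    have := huj 1
    have := huj k.2
    unfold cco
    by_cases h : k.1 = k.2
    · simp only [h, if_true]; rw [h] at *; fun_prop
    · simp only [h, if_false]; fun_prop
  -- derivatives of the double layer potential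
  have hD : ∀ m b, pd m (fun w => ∫ s in (0 : ℝ)..L, ∑ j : Fin 2,
          tracM lam mu (nn s) (fun y => Emat mu rho om γs γp (w - y)) (z s) j b * u s j) x
      = ∫ s in (0 : ℝ)..L, ∑ k : Fin 2 × Fin 2,
          cco lam mu (nn s) (u s) k * pd m (pd k.1 (E k.2 b)) (x - z s) := by
    intro m b
    rw [← pd_param hU hzc hx (fun k : Fin 2 × Fin 2 => pd k.1 (E k.2 b))
      (fun k => hE1 k.2 b k.1) (fun k s => cco lam mu (nn s) (u s) k) hcco m]
    obtain ⟨δ, hδ, K, hK, hKU, hnear⟩ := near_curve (L := L) hU hzc hx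
    refine pd_congr_on (U := Metric.ball x δ) Metric.isOpen_ball ?_ (Metric.mem_ball_self hδ) m
    intro w hw
    refine intervalIntegral.integral_congr fun s hs => ?_
    have := kernel_eq lam mu (nn s) (u s) (Emat mu rho om γs γp) w (z s) (by
      intro a b
      have := diffAt_of_on hU (hEc a b) (by norm_num) (hKU (hnear w hw s hs))
      rw [hE] at this
      exact this) b
    simp only [hE]
    exact this
  have hDc : ∀ m b, Continuous (fun s => ∑ k : Fin 2 × Fin 2,
          cco lam mu (nn s) (u s) k * pd m (pd k.1 (E k.2 b)) (x - z s)) := by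
    intro m b
    exact continuous_finsetSum _ fun k _ => (hcco k).mul (cc (hE2 _ _ _ _))
  have I := fun m b => HI.of_cont (L := L) (hDc m b)
  -- continuity facts
  have kγs := cc hγs
  have kγp := cc hγp
  have kE : ∀ a b, Continuous (fun s => Emat mu rho om γs γp (x - z s) a b) := by
    intro a b; have := cc (hEc a b); rw [hE] at this; exact this
  have kE1 : ∀ a b l, Continuous (fun s => pd l (E a b) (x - z s)) := fun a b l => cc (hE1 a b l)
  have kE2 : ∀ a b l m, Continuous (fun s => pd m (pd l (E a b)) (x - z s)) :=
    fun a b l m => cc (hE2 a b l m)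
  have kR1 : ∀ l, Continuous (fun s => pd l R (x - z s)) := fun l => cc (hR1 l)
  have kR2 : ∀ l m, Continuous (fun s => pd m (pd l R) (x - z s)) := fun l m => cc (hR2 m l)
  have kp1 : ∀ l, Continuous (fun s => pd l γp (x - z s)) := fun l => cc (hp1 l)
  have kp2 : ∀ l m, Continuous (fun s => pd m (pd l γp) (x - z s)) :=
    fun l m => cc (pd_contDiffOn hU (m := 2) (hp1 l) (by norm_num) m)
  have hzC0 : Continuous (fun s => (deriv z s 0 : ℂ)) := Complex.continuous_ofReal.comp hz0
  have hzC1 : Continuous (fun s => (deriv z s 1 : ℂ)) := Complex.continuous_ofReal.comp hz1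
  have hnt : Continuous (fun s => ((ν 0 * deriv z s 0 + ν 1 * deriv z s 1 : ℝ) : ℂ)) :=
    Complex.continuous_ofReal.comp (by fun_prop)
  have hnnu : Continuous (fun s => ((ν 0 * nn s 0 + ν 1 * nn s 1 : ℝ) : ℂ)) :=
    Complex.continuous_ofReal.comp
      ((continuous_const.mul (hnc 0)).add (continuous_const.mul (hnc 1)))
  -- right hand side integrals
  have f1 : Continuous (fun s => ∑ j : Fin 2,
              ((γs (x - z s) - γp (x - z s)) * (ν i : ℂ) * (nn s j : ℂ)
                - (if i = j then ((ν 0 * nn s 0 + ν 1 * nn s 1 : ℝ) : ℂ) * γs (x - z s) else 0)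
                - ((ν 0 * deriv z s 0 + ν 1 * deriv z s 1 : ℝ) : ℂ) * γs (x - z s) * ArotC i j)
                * u s j) := by
    refine continuous_finsetSum _ fun j _ => ?_
    refine Continuous.mul ((Continuous.sub (((kγs.sub kγp).mul continuous_const).mul (hnC j)) ?_).sub
      ((hnt.mul kγs).mul continuous_const)) (huj j)
    by_cases h : i = j
    · simp only [h, if_true]; exact hnnu.mul kγs
    · simp only [h, if_false]; exact continuous_const
  have f2 : Continuous (fun s => ((ν 0 * deriv z s 0 + ν 1 * deriv z s 1 : ℝ) : ℂ)
                * ∑ j : Fin 2, (ArotC * Emat mu rho om γs γp (x - z s)) i j * u s j) := by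
    refine hnt.mul (continuous_finsetSum _ fun j _ => Continuous.mul ?_ (huj j))
    simp only [Matrix.mul_apply]
    exact continuous_finsetSum _ fun l _ => continuous_const.mul (kE l j)
  have f3 : Continuous (fun s => ∑ j : Fin 2,
              dirD (Arot.mulVec ν) (fun w => Emat mu rho om γs γp w i j) (x - z s)
                * deriv u s j) := by
    refine continuous_finsetSum _ fun j _ => Continuous.mul ?_ (huj' j)
    have h0 := kE1 i j 0
    have h1 := kE1 i j 1
    rw [hE] at h0 h1
    exact (continuous_const.mul h0).add (continuous_const.mul h1)
  have f4 : Continuous (fun s => dirD (Arot.mulVec ν) γp (x - z s) * deriv u s i) :=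
    ((continuous_const.mul (kp1 0)).add (continuous_const.mul (kp1 1))).mul (huj' i)
  have f5 : Continuous (fun s => (∑ j : Fin 2, pd j R (x - z s)
                  * ArotC.mulVec (deriv u s) j) * (ν i : ℂ)) := by
    refine Continuous.mul (continuous_finsetSum _ fun j _ => (kR1 j).mul ?_) continuous_const
    simp only [Matrix.mulVec, dotProduct]
    exact continuous_finsetSum _ fun l _ => continuous_const.mul (huj' l)
  have f6 : Continuous (fun s => ((ν 0 : ℂ) * deriv u s 0 + (ν 1 : ℂ) * deriv u s 1)
                * ArotC.mulVec (fun j => pd j R (x - z s)) i) := by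
    refine ((continuous_const.mul (huj' 0)).add (continuous_const.mul (huj' 1))).mul ?_
    simp only [Matrix.mulVec, dotProduct]
    exact continuous_finsetSum _ fun l _ => continuous_const.mul (kR1 l)
  have J := ((((((HI.of_cont (L := L) f1).cmul ((mu * ks ^ 2 : ℝ) : ℂ)).add
    ((HI.of_cont (L := L) f2).cmul ((2 * mu ^ 2 * ks ^ 2 : ℝ) : ℂ))).sub
    ((HI.of_cont (L := L) f3).cmul ((4 * mu ^ 2 : ℝ) : ℂ))).add
    ((HI.of_cont (L := L) f4).cmul ((4 * mu ^ 2 / (lam + 2 * mu) : ℝ) : ℂ))).add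
    ((HI.of_cont (L := L) f5).cmul ((2 * mu : ℝ) : ℂ))).sub
    ((HI.of_cont (L := L) f6).cmul ((2 * mu : ℝ) : ℂ))
  -- left hand side
  have Lh := (((((I 0 0).add (I 1 1)).cmul ((lam : ℂ) * (ν i : ℂ))).add
    ((((I 0 i).cmul (ν 0 : ℂ)).add ((I 1 i).cmul (ν 1 : ℂ))).cmul (2 * (mu : ℂ)))).add
    (((I 0 1).sub (I 1 0)).cmul ((mu : ℂ) * ((![ν 1, -ν 0] : V2) i : ℂ)))).cmul (-1)
  -- the exact derivative
  have curve : ∀ {g : V2 → ℂ} {n : WithTop ℕ∞}, ContDiffOn ℝ n g U → n ≠ 0 → ∀ s,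
      HasDerivAt (fun s => g (x - z s))
      (-((deriv z s 0 : ℂ) * pd 0 g (x - z s) + (deriv z s 1 : ℂ) * pd 1 g (x - z s))) s := by
    intro g n hg hn s
    exact hasDerivAt_curve (hzd s) (diffAt_of_on hU hg hn (hx s))
  have dE : ∀ a b l s, HasDerivAt (fun s => pd l (E a b) (x - z s))
      (-((deriv z s 0 : ℂ) * pd 0 (pd l (E a b)) (x - z s)
        + (deriv z s 1 : ℂ) * pd 1 (pd l (E a b)) (x - z s))) s :=
    fun a b l => curve (hE1 a b l) (by norm_num)
  have dR : ∀ l s, HasDerivAt (fun s => pd l R (x - z s))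
      (-((deriv z s 0 : ℂ) * pd 0 (pd l R) (x - z s)
        + (deriv z s 1 : ℂ) * pd 1 (pd l R) (x - z s))) s :=
    fun l => curve (hR1 l) (by norm_num)
  have dp : ∀ l s, HasDerivAt (fun s => pd l γp (x - z s))
      (-((deriv z s 0 : ℂ) * pd 0 (pd l γp) (x - z s)
        + (deriv z s 1 : ℂ) * pd 1 (pd l γp) (x - z s))) s :=
    fun l => curve (hp1 l) (by norm_num)
  have dΦ := fun s =>
    ((((((((dE i 0 0 s).const_mul (-(ν 1 : ℂ))).add ((dE i 0 1 s).const_mul (ν 0 : ℂ))).mul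
          (hud s 0)).add
      ((((dE i 1 0 s).const_mul (-(ν 1 : ℂ))).add ((dE i 1 1 s).const_mul (ν 0 : ℂ))).mul
          (hud s 1))).const_mul (-((4 * mu ^ 2 : ℝ) : ℂ))).add
      (((((dp 0 s).const_mul (-(ν 1 : ℂ))).add ((dp 1 s).const_mul (ν 0 : ℂ))).mul
          (hud s i)).const_mul (((4 * mu ^ 2 / (lam + 2 * mu) : ℝ) : ℂ)))).add
      ((((dR 1 s).mul (hud s 0)).sub ((dR 0 s).mul (hud s 1))).const_mul
          (((2 * mu : ℝ) : ℂ) * (ν i : ℂ)))).sub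
      (((((hud s 0).const_mul (ν 0 : ℂ)).add ((hud s 1).const_mul (ν 1 : ℂ))).mul
        (((dR 0 s).const_mul (ArotC i 0)).add ((dR 1 s).const_mul (ArotC i 1)))).const_mul
          ((2 * mu : ℝ) : ℂ))
  have hzL : z L = z 0 := by simpa using hzper 0
  have huL : u L = u 0 := by simpa using huper 0
  have a0 := huj 0
  have a1 := huj 1
  have ai := huj i
  have b0 := huj' 0
  have b1 := huj' 1
  have bi := huj' i
  have HΦ := intervalIntegral.integral_eq_sub_of_hasDerivAt (a := 0) (b := L) (fun s _ => dΦ s) (by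
    refine Continuous.intervalIntegrable ?_ _ _
    simp only [Pi.add_apply, Pi.mul_apply, Pi.sub_apply]
    fun_prop)
  have hHI : HI L _ 0 := ⟨(by
    refine Continuous.intervalIntegrable ?_ _ _
    simp only [Pi.add_apply, Pi.mul_apply, Pi.sub_apply]
    fun_prop), HΦ.trans (by simp [hzL, huL])⟩
  have fin := HI.eq_of Lh J hHI (by
    intro s
    have key := alg_identity lam mu rho om ks kp hmu hlm hrho hom hks hkp U hU γs γp R hR E hE
      hγs hγp hHs hHp (x - z s) (hx s) (nn s) ν (deriv z s) (hnn s) (u s) i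
    have g3 : ∀ j, dirD (Arot.mulVec ν) (fun w => Emat mu rho om γs γp w i j) (x - z s)
        = -(ν 1 : ℂ) * pd 0 (E i j) (x - z s) + (ν 0 : ℂ) * pd 1 (E i j) (x - z s) := by
      intro j; rw [hE]; simp [dirD, Arot, Matrix.mulVec, dotProduct]
    have g4 : dirD (Arot.mulVec ν) γp (x - z s)
        = -(ν 1 : ℂ) * pd 0 γp (x - z s) + (ν 0 : ℂ) * pd 1 γp (x - z s) := by
      simp [dirD, Arot, Matrix.mulVec, dotProduct]
    have g5 : ∑ j : Fin 2, pd j R (x - z s) * ArotC.mulVec (deriv u s) j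
        = pd 1 R (x - z s) * deriv u s 0 - pd 0 R (x - z s) * deriv u s 1 := by
      simp [ArotC, Matrix.mulVec, dotProduct]; ring
    have g6 : ArotC.mulVec (fun j => pd j R (x - z s)) i
        = ArotC i 0 * pd 0 R (x - z s) + ArotC i 1 * pd 1 R (x - z s) := by
      simp [Matrix.mulVec, dotProduct]
    simp only [g3, g4, g5, g6, Pi.add_apply, Pi.mul_apply, Pi.sub_apply]
    rw [Fin.sum_univ_two (f := fun j => (-(ν 1 : ℂ) * pd 0 (E i j) (x - z s)
      + (ν 0 : ℂ) * pd 1 (E i j) (x - z s)) * deriv u s j)]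
    rw [Fin.sum_univ_two (f := fun j => (-(ν 1 : ℂ) * ((deriv z s 0 : ℂ) * pd 0 (pd 0 (E i j)) (x - z s)
      + (deriv z s 1 : ℂ) * pd 1 (pd 0 (E i j)) (x - z s))
      + (ν 0 : ℂ) * ((deriv z s 0 : ℂ) * pd 0 (pd 1 (E i j)) (x - z s)
      + (deriv z s 1 : ℂ) * pd 1 (pd 1 (E i j)) (x - z s))) * u s j)] at key
    linear_combination key)
  rw [← fin]
  unfold tracV
  simp only [hD]
  ring

end
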